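/- arXiv:1601.03174 — 2 statements merged into one kernel-verified Lean document; each statement's English description precedes it below -/
import Mathlib

section
/- Let Δ be a nonnegative integer, let G be a graph with maximum degree at most Δ, let W ⊆ V(G), let h = Δ+2, and let G' be the graph obtained from the induced subgraph G[W] by adding h new pairwise adjacent vertices v_1, …, v_h and, for every u ∈ W with r = |N_G(u)∖W| ≥ 1, adding the edges uv_1, …, uv_r. Let τ be any multiset of nonnegative integers equal to the multiset {d_{G'}(v_1), …, d_{G'}(v_h)} together with a multiset of integers each at most Δ. Then for every set A of unordered pairs of distinct non-adjacent vertices of G' such that the degree multiset of G'+A equals τ, every pair in A has both of its endpoints in W. -/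
/-- The degree of a vertex, as the `ncard` of its neighbor set. -/
noncomputable def ndeg {V : Type*} (H : SimpleGraph V) (v : V) : ℕ :=
  (H.neighborSet v).ncard

/-- The graph obtained from `G[W]` by adding `h` new pairwise adjacent vertices
`v_1, …, v_h` (here indexed by `Fin h`) and joining every `u ∈ W` to
`v_1, …, v_r`, where `r = |N_G(u) ∖ W|`. -/
def kernelGraph {V : Type*} (G : SimpleGraph V) (W : Finset V) (h : ℕ) :
    SimpleGraph (↥W ⊕ Fin h) where
  Adj x y :=
    match x, y with
    | Sum.inl u, Sum.inl w => G.Adj ↑u ↑w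
    | Sum.inl u, Sum.inr j => (j : ℕ) < ((G.neighborSet ↑u) \ ↑W).ncard
    | Sum.inr j, Sum.inl u => (j : ℕ) < ((G.neighborSet ↑u) \ ↑W).ncard
    | Sum.inr i, Sum.inr j => i ≠ j
  symm := by
    refine ⟨?_⟩
    rintro (u | i) (w | j) hxy
    · exact hxy.symm
    · exact hxy
    · exact hxy
    · exact hxy.symm
  loopless := by
    refine ⟨?_⟩
    rintro (u | i) hxy
    · exact G.loopless.irrefl _ hxy
    · exact hxy rfl

theorem added_edges_avoid_new_vertices
    {V : Type*} [Fintype V] [DecidableEq V] (G : SimpleGraph V)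
    (Δ : ℕ) (hG : ∀ v : V, ndeg G v ≤ Δ) (W : Finset V)
    (τ ρ : Multiset ℕ) (hρ : ∀ x ∈ ρ, x ≤ Δ)
    (hτ : τ = ((Finset.univ : Finset (Fin (Δ + 2))).val.map fun j =>
        ndeg (kernelGraph G W (Δ + 2)) (Sum.inr j)) + ρ)
    (A : Finset (Sym2 (↥W ⊕ Fin (Δ + 2))))
    (hA : ∀ e ∈ A, ¬ e.IsDiag ∧ e ∉ (kernelGraph G W (Δ + 2)).edgeSet)
    (hdeg : (Finset.univ.val.map fun v : ↥W ⊕ Fin (Δ + 2) =>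
        ndeg (kernelGraph G W (Δ + 2) ⊔ SimpleGraph.fromEdgeSet ↑A) v) = τ) :
    ∀ e ∈ A, ∀ x ∈ e, ∃ u : ↥W, x = Sum.inl u := by
  classical
  set K := kernelGraph G W (Δ + 2) with hK
  set H := K ⊔ SimpleGraph.fromEdgeSet (A : Set (Sym2 (↥W ⊕ Fin (Δ + 2)))) with hH
  have hmono : ∀ v, ndeg K v ≤ ndeg H v := by
    intro v
    apply Set.ncard_le_ncard _ (Set.toFinite _)
    intro y hy
    exact Or.inl hy
  have hbig : ∀ j : Fin (Δ + 2), Δ < ndeg K (Sum.inr j) := by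
    intro j
    have hsub : ((Finset.univ.erase j).image
        (Sum.inr : Fin (Δ + 2) → ↥W ⊕ Fin (Δ + 2)) : Set (↥W ⊕ Fin (Δ + 2)))
        ⊆ K.neighborSet (Sum.inr j) := by
      intro y hy
      simp only [Finset.coe_image, Set.mem_image, Finset.mem_coe, Finset.mem_erase] at hy
      obtain ⟨i, hi, rfl⟩ := hy
      exact fun h => hi.1 h.symm
    have h1 := Set.ncard_le_ncard hsub (Set.toFinite _)
    rw [Set.ncard_coe_finset, Finset.card_image_of_injective _ Sum.inr_injective,
      Finset.card_erase_of_mem (Finset.mem_univ _), Finset.card_univ, Fintype.card_fin] at h1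
    unfold ndeg
    omega
  have hsum : ∑ j : Fin (Δ + 2), ndeg H (Sum.inr j) ≤
      ∑ j : Fin (Δ + 2), ndeg K (Sum.inr j) := by
    have h1 := congrArg (fun m : Multiset ℕ => (m.map fun x => if Δ < x then x else 0).sum)
      (hdeg.trans hτ)
    simp only [Multiset.map_map, Multiset.map_add, Multiset.sum_add, Function.comp_def] at h1
    have h2 : (ρ.map fun x => if Δ < x then x else 0).sum = 0 := by
      apply Multiset.sum_eq_zero
      intro y hy
      obtain ⟨x, hx, rfl⟩ := Multiset.mem_map.1 hy
      exact if_neg (not_lt.2 (hρ x hx))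
    rw [h2] at h1
    change (∑ v : ↥W ⊕ Fin (Δ + 2), if Δ < ndeg H v then ndeg H v else 0) =
      (∑ j : Fin (Δ + 2), if Δ < ndeg K (Sum.inr j) then ndeg K (Sum.inr j) else 0) + 0 at h1
    rw [Fintype.sum_sum_type] at h1
    have h3 : (∑ j : Fin (Δ + 2), if Δ < ndeg H (Sum.inr j) then ndeg H (Sum.inr j) else 0)
        = ∑ j : Fin (Δ + 2), ndeg H (Sum.inr j) :=
      Finset.sum_congr rfl fun j _ => if_pos ((hbig j).trans_le (hmono _))
    have h4 : (∑ j : Fin (Δ + 2), if Δ < ndeg K (Sum.inr j) then ndeg K (Sum.inr j) else 0)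
        = ∑ j : Fin (Δ + 2), ndeg K (Sum.inr j) :=
      Finset.sum_congr rfl fun j _ => if_pos (hbig j)
    rw [h3, h4] at h1
    omega
  intro e he x hx
  rcases x with u | j
  · exact ⟨u, rfl⟩
  exfalso
  obtain ⟨y, rfl⟩ := Sym2.mem_iff_exists.1 hx
  obtain ⟨hd, hn⟩ := hA _ he
  have hlt : ndeg K (Sum.inr j) < ndeg H (Sum.inr j) := by
    apply Set.ncard_lt_ncard _ (Set.toFinite _)
    refine ⟨fun z hz => Or.inl hz, fun hc => hn ?_⟩
    refine hc (?_ : H.Adj (Sum.inr j) y)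
    refine Or.inr ?_
    rw [SimpleGraph.fromEdgeSet_adj]
    exact ⟨he, fun h => hd (by simpa using h)⟩
  exact absurd hsum (not_le.2 (Finset.sum_lt_sum (fun i _ => hmono _)
    ⟨j, Finset.mem_univ _, hlt⟩))
end

section
/- Let k ≥ 2 and d − (k−1) ≥ 3, let G_1, …, G_t be d-regular graphs each with n vertices and m edges, and let G' be the subdivision of the disjoint union of G_1, …, G_t. Then some G_i contains a clique on k vertices if and only if there exists a vertex set U ⊆ V(G') with |U| ≤ k(k−1)/2 such that the degree multiset of G'−U consists of nt−k copies of d, k copies of d−(k−1), and mt − k(k−1)/2 copies of 2. -/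
/-- The disjoint union of the family of graphs `Gs 0, …, Gs (t-1)`, realized on the
vertex set `Fin t × V`. -/
def disjUnion {t : ℕ} {V : Type*} (Gs : Fin t → SimpleGraph V) :
    SimpleGraph (Fin t × V) where
  Adj x y := x.1 = y.1 ∧ (Gs x.1).Adj x.2 y.2
  symm := by
    refine ⟨?_⟩
    rintro ⟨i, u⟩ ⟨j, w⟩ ⟨h, hadj⟩
    cases h
    exact ⟨rfl, hadj.symm⟩
  loopless := by
    refine ⟨?_⟩
    rintro ⟨i, u⟩ ⟨-, hadj⟩
    exact (Gs i).loopless.irrefl u hadj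

instance {t : ℕ} {V : Type*} [DecidableEq V] (Gs : Fin t → SimpleGraph V)
    [∀ i, DecidableRel (Gs i).Adj] : DecidableRel (disjUnion Gs).Adj := fun x y =>
  inferInstanceAs (Decidable (x.1 = y.1 ∧ (Gs x.1).Adj x.2 y.2))

/-- The subdivision of a graph `G`: every edge `uv` is replaced by a new vertex
(the corresponding element of `G.edgeSet`) adjacent exactly to `u` and `v`. -/
def subdiv {V : Type*} (G : SimpleGraph V) : SimpleGraph (V ⊕ G.edgeSet) where
  Adj x y :=
    match x, y with
    | Sum.inl u, Sum.inr e => u ∈ (e : Sym2 V)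
    | Sum.inr e, Sum.inl u => u ∈ (e : Sym2 V)
    | _, _ => False
  symm := by refine ⟨?_⟩; rintro (u | e) (w | f) h <;> exact h
  loopless := by refine ⟨?_⟩; rintro (u | e) h <;> exact h


section helpers
variable {W : Type*} [Fintype W] [DecidableEq W] (G : SimpleGraph W)

theorem aux_inl (w : W) (A : Set W) (hA : A ⊆ G.neighborSet w) (S : Set (W ⊕ G.edgeSet))
    (hl : ∀ v, Sum.inl v ∉ S)
    (hr : ∀ e : G.edgeSet, Sum.inr e ∈ S ↔ ∃ v ∈ A, (e : Sym2 W) = s(w, v)) :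
    S.ncard = A.ncard := by
  symm
  refine Set.ncard_congr (fun v hv => Sum.inr ⟨s(w, v), hA hv⟩) ?_ ?_ ?_
  · intro v hv
    exact (hr _).2 ⟨v, hv, rfl⟩
  · intro v v' hv hv' h
    have h1 := congrArg Subtype.val (Sum.inr.inj h)
    simp at h1
    grind
  · rintro (v | e) hx
    · exact absurd hx (hl v)
    · obtain ⟨v, hv, he⟩ := (hr e).1 hx
      exact ⟨v, hv, by congr 1; exact Subtype.ext he.symm⟩

theorem aux_nbr_inl (w : W) : ((subdiv G).neighborSet (Sum.inl w)).ncard = ndeg G w := by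
  refine aux_inl G w (G.neighborSet w) subset_rfl _ ?_ ?_
  · intro v h
    exact h
  · intro e
    show w ∈ (e : Sym2 W) ↔ _
    constructor
    · intro h
      obtain ⟨v, hv⟩ := h
      refine ⟨v, ?_, hv⟩
      have := e.2
      rw [hv] at this
      exact this
    · rintro ⟨v, -, h⟩
      rw [h]; simp

theorem aux_nbr_inr (e : G.edgeSet) : ((subdiv G).neighborSet (Sum.inr e)).ncard = 2 := by
  obtain ⟨e, he⟩ := e
  induction e with | _ a b =>
  have hab : G.Adj a b := he
  have : (subdiv G).neighborSet (Sum.inr ⟨s(a, b), he⟩) = {Sum.inl a, Sum.inl b} := by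
    ext x
    rcases x with v | f
    · show v ∈ s(a, b) ↔ _
      simp
    · show False ↔ _
      simp
  rw [this, Set.ncard_pair]
  simpa using hab.ne

theorem aux_handshake [Fintype G.edgeSet] (d : ℕ) (hreg : ∀ w, ndeg G w = d) :
    2 * Fintype.card G.edgeSet = Fintype.card W * d := by
  classical
  have := G.sum_degrees_eq_twice_card_edges
  have h7 : ∀ w, G.degree w = d := fun w => by
    rw [← hreg w, ndeg, Set.ncard_eq_toFinset_card', SimpleGraph.degree,
      SimpleGraph.neighborFinset]
  simp only [h7, Finset.sum_const, Finset.card_univ, smul_eq_mul] at this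
  rw [this, ← Nat.card_eq_fintype_card, Nat.card_coe_set_eq, ← Set.ncard_coe_finset,
    SimpleGraph.coe_edgeFinset]

theorem aux_main [Fintype G.edgeSet] [DecidableEq (W ⊕ G.edgeSet)] (N M k d : ℕ) (hk : 2 ≤ k)
    (hd : 3 ≤ d - (k - 1)) (hN : Fintype.card W = N) (hM : Fintype.card G.edgeSet = M)
    (hreg : ∀ w, ndeg G w = d) :
    (∃ K : Finset W, G.IsNClique k K) ↔
      ∃ U : Finset (W ⊕ G.edgeSet), U.card ≤ k * (k - 1) / 2 ∧
        ((Finset.univ \ U).val.map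
            fun x => (((subdiv G).neighborSet x) \ ↑U).ncard) =
          Multiset.replicate (N - k) d + Multiset.replicate k (d - (k - 1)) +
            Multiset.replicate (M - k * (k - 1) / 2) 2 := by
  classical
  rw [← Nat.choose_two_right]
  constructor
  · rintro ⟨K, hK⟩
    set B : Finset G.edgeSet := Finset.univ.filter (fun e => ∀ w ∈ (e : Sym2 W), w ∈ K) with hB
    have hBim : B.map (Function.Embedding.subtype _) = K.offDiag.image Sym2.mk.uncurry := by
      ext e
      induction e with | _ a b =>
      simp only [Finset.mem_map, Finset.mem_image, Finset.mem_offDiag, hB, Finset.mem_filter,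
        Finset.mem_univ, true_and, Function.Embedding.subtype_apply]
      constructor
      · rintro ⟨⟨e, he⟩, h, rfl⟩
        exact ⟨(a, b), ⟨h a (by simp), h b (by simp), G.ne_of_adj he⟩, rfl⟩
      · rintro ⟨⟨x, y⟩, ⟨hx, hy, hxy⟩, h⟩
        have hadj : G.Adj x y := hK.1 hx hy hxy
        refine ⟨⟨s(x, y), hadj⟩, ?_, h⟩
        simp [hx, hy]
    have hBc : B.card = k.choose 2 := by
      rw [← Finset.card_map (Function.Embedding.subtype _), hBim, ← hK.2]
      exact Sym2.card_image_offDiag K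
    refine ⟨B.map Function.Embedding.inr, by simp [hBc], ?_⟩
    have hdec : (Finset.univ \ B.map Function.Embedding.inr).val =
        (Kᶜ.val.map (Sum.inl : W → W ⊕ G.edgeSet) + K.val.map Sum.inl) + Bᶜ.val.map Sum.inr := by
      have h1 : (Finset.univ \ B.map Function.Embedding.inr : Finset (W ⊕ G.edgeSet)) =
        Finset.disjSum Finset.univ Bᶜ := by
        ext x
        rcases x with x | x <;> simp
      have h2 : (Finset.univ : Finset W) = Finset.disjUnion Kᶜ K disjoint_compl_left := by
        ext x; simp [or_comm, em]
      rw [h1, Finset.val_disjSum, h2, Finset.disjUnion_val, Multiset.disjSum, Multiset.map_add]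
    rw [hdec, Multiset.map_add, Multiset.map_add, Multiset.map_map, Multiset.map_map,
      Multiset.map_map]
    have hcompl : ∀ w, (((subdiv G).neighborSet (Sum.inl w)) \ ((B.map Function.Embedding.inr : Finset (W ⊕ G.edgeSet)) : Set (W ⊕ G.edgeSet))).ncard
        = (if w ∈ K then d - (k - 1) else d) := by
      intro w
      have key := aux_inl G w (G.neighborSet w \ (if w ∈ K then (↑(K.erase w) : Set W) else ∅))
        Set.sdiff_subset
        (((subdiv G).neighborSet (Sum.inl w)) \ ((B.map Function.Embedding.inr : Finset (W ⊕ G.edgeSet)) : Set (W ⊕ G.edgeSet))) ?_ ?_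
      · rw [key]
        split_ifs with hw
        · rw [Set.ncard_sdiff, Set.ncard_coe_finset, Finset.card_erase_of_mem hw, hK.2]
          · congr 1; exact hreg w
          · intro v hv
            simp at hv
            exact hK.1 hw hv.1 (Ne.symm hv.2)
        · rw [Set.sdiff_empty]
          exact hreg w
      · intro v h
        exact h.1
      · rintro ⟨e, he⟩
        have h0 : (Sum.inr ⟨e, he⟩ ∈ (subdiv G).neighborSet (Sum.inl w)) ↔ w ∈ e := Iff.rfl
        rw [Set.mem_sdiff, h0]
        constructor
        · rintro ⟨⟨v, rfl⟩, h2⟩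
          refine ⟨v, ⟨he, ?_⟩, rfl⟩
          split_ifs with hw
          · intro hv
            apply h2
            simp at hv
            simp [hB, hw, hv.1]
          · simp
        · rintro ⟨v, ⟨hv1, hv2⟩, h⟩
          simp only at h
          subst h
          refine ⟨by simp, ?_⟩
          have hne : w ≠ v := G.ne_of_adj he
          intro h3
          simp [hB] at h3
          simp [h3.1, h3.2, hne.symm] at hv2
    congr 1
    · congr 1
      · rw [Multiset.eq_replicate]
        refine ⟨by simp [Finset.card_compl, hN, hK.2], ?_⟩
        intro b hb
        obtain ⟨w, hw, rfl⟩ := Multiset.mem_map.1 hb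
        have hw' : w ∉ K := by simpa using hw
        simp only [Function.comp]
        rw [hcompl, if_neg hw']
      · rw [Multiset.eq_replicate]
        refine ⟨by simp [hK.2], ?_⟩
        intro b hb
        obtain ⟨w, hw, rfl⟩ := Multiset.mem_map.1 hb
        have hw' : w ∈ K := by simpa using hw
        simp only [Function.comp]
        rw [hcompl, if_pos hw']
    · rw [Multiset.eq_replicate]
      refine ⟨by simp [Finset.card_compl, hM, hBc], ?_⟩
      intro b hb
      obtain ⟨e, he, rfl⟩ := Multiset.mem_map.1 hb
      simp only [Function.comp]
      rw [← aux_nbr_inr G e]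
      congr 1
      ext x
      rcases x with x | x
      · simp
      · have : (Sum.inr x : W ⊕ G.edgeSet) ∉ (subdiv G).neighborSet (Sum.inr e) := fun h => h
        simp [this]
  · rintro ⟨U, hU, hf⟩
    set f : W ⊕ G.edgeSet → ℕ := fun x => (((subdiv G).neighborSet x) \ ↑U).ncard with hfdef
    have hkN : k ≤ N := by
      have hpos : 0 < N := by
        by_contra h
        have hW : IsEmpty W := by
          rw [← Fintype.card_eq_zero_iff]; omega
        have hE : IsEmpty G.edgeSet := by
          refine ⟨fun ⟨e, he⟩ => ?_⟩
          induction e with | _ a b => exact hW.elim a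
        have := congrArg Multiset.card hf
        simp at this
        omega
      obtain ⟨w⟩ : Nonempty W := Fintype.card_pos_iff.1 (by omega)
      have h1 : (G.neighborSet w).ncard = d := hreg w
      have h2 := Set.ncard_le_card (G.neighborSet w)
      rw [Nat.card_eq_fintype_card] at h2
      omega
    have hfr : ∀ e, f (Sum.inr e) ≤ 2 := fun e => by
      rw [← aux_nbr_inr G e]
      exact Set.ncard_le_ncard Set.sdiff_subset
    have hcount : ∀ p : ℕ → Prop, [DecidablePred p] →
        ((Finset.univ \ U).filter (fun x => p (f x))).card =
        (if p d then N - k else 0) + (if p (d - (k-1)) then k else 0) +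
          (if p 2 then M - k.choose 2 else 0) := by
      intro p _
      have h := congrArg (Multiset.countP p) hf
      rw [Multiset.countP_map, Multiset.countP_add, Multiset.countP_add] at h
      have hr : ∀ a b : ℕ, Multiset.countP p (Multiset.replicate a b) = if p b then a else 0 := by
        intro a b
        split_ifs with hb
        · rw [Multiset.countP_eq_card.2, Multiset.card_replicate]
          intro x hx
          rwa [Multiset.eq_of_mem_replicate hx]
        · rw [Multiset.countP_eq_zero]
          intro x hx
          rwa [Multiset.eq_of_mem_replicate hx]
      rw [hr, hr, hr] at h
      exact h
    -- every original vertex survives with degree at least three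
    have hall : ∀ w, Sum.inl w ∉ U ∧ 3 ≤ f (Sum.inl w) := by
      have h := hcount (fun x => 3 ≤ x)
      rw [if_pos (by omega), if_pos hd, if_neg (by omega)] at h
      have hsub : (Finset.univ \ U).filter (fun x => 3 ≤ f x) ⊆
          (Finset.univ : Finset W).map Function.Embedding.inl := by
        intro x hx
        rcases x with w | e
        · simp
        · have := hfr e
          simp at hx
          omega
      have heq := Finset.eq_of_subset_of_card_le hsub (by
        rw [h, Finset.card_map, Finset.card_univ, hN]; omega)
      intro w
      have : Sum.inl w ∈ (Finset.univ \ U).filter (fun x => 3 ≤ f x) := by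
        rw [heq]; simp
      simpa using this
    set S : Finset W := Finset.univ.filter (fun w => f (Sum.inl w) ≠ d) with hS
    have hScard : S.card = k := by
      have h := hcount (fun x => 3 ≤ x ∧ x ≠ d)
      rw [if_neg (by omega), if_pos (by omega), if_neg (by omega)] at h
      have heq : (Finset.univ \ U).filter (fun x => 3 ≤ f x ∧ f x ≠ d) =
          S.map Function.Embedding.inl := by
        ext x
        rcases x with w | e
        · have := hall w
          simp [hS, this]
        · have := hfr e
          simp
          omega
      rw [heq, Finset.card_map] at h
      omega
    have hUS : ∀ e : G.edgeSet, Sum.inr e ∈ U → ∀ w ∈ (e : Sym2 W), w ∈ S := by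
      intro e he w hw
      have : f (Sum.inl w) < d := by
        rw [← hreg w, ← aux_nbr_inl G w]
        refine Set.ncard_lt_ncard ⟨Set.sdiff_subset, fun h => ?_⟩ (Set.toFinite _)
        have h1 : Sum.inr e ∈ (subdiv G).neighborSet (Sum.inl w) := hw
        exact (h h1).2 he
      simp [hS]
      omega
    set B : Finset G.edgeSet := Finset.univ.filter (fun e => Sum.inr e ∈ U) with hB
    have hBU : B.map Function.Embedding.inr = U := by
      ext x
      rcases x with w | e
      · simp [(hall w).1]
      · simp [hB]
    have hBc : k.choose 2 ≤ B.card := by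
      have h := congrArg Multiset.card hf
      have h3 : (Finset.univ \ U).card = N + M - B.card := by
        rw [← Finset.compl_eq_univ_sdiff, Finset.card_compl, ← hBU, Finset.card_map,
          Fintype.card_sum, hN, hM]
      have h4 : B.card ≤ M := by
        rw [← hM]; exact Finset.card_le_univ B
      have h5 : k.choose 2 ≤ M := by
        have h6 : 2 * M = N * d := by
          rw [← hM, ← hN]; exact aux_handshake G d hreg
        have h8 : k * (k - 1) ≤ N * d := Nat.mul_le_mul hkN (by omega)
        rw [Nat.choose_two_right]
        omega
      rw [Multiset.card_map, Finset.card_val, h3] at h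
      simp at h
      omega
    have hBsub : B.map (Function.Embedding.subtype _) ⊆ S.offDiag.image Sym2.mk.uncurry := by
      intro e he
      simp only [Finset.mem_map, hB, Finset.mem_filter, Finset.mem_univ, true_and,
        Function.Embedding.subtype_apply] at he
      obtain ⟨⟨e', he'⟩, h, rfl⟩ := he
      have h1 := hUS _ h
      simp only at h1 ⊢
      induction e' with | _ a b =>
      rw [Finset.mem_image]
      refine ⟨(a, b), ?_, rfl⟩
      rw [Finset.mem_offDiag]
      exact ⟨h1 a (by simp), h1 b (by simp), G.ne_of_adj he'⟩
    have hBeq := Finset.eq_of_subset_of_card_le hBsub (by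
      rw [Finset.card_map]
      refine le_trans (le_of_eq ?_) hBc
      rw [← hScard]
      exact Sym2.card_image_offDiag S)
    refine ⟨S, ?_, hScard⟩
    intro a ha b hb hab
    have : s(a, b) ∈ B.map (Function.Embedding.subtype _) := by
      rw [hBeq, Finset.mem_image]
      exact ⟨(a, b), Finset.mem_offDiag.2 ⟨ha, hb, hab⟩, rfl⟩
    rw [Finset.mem_map] at this
    obtain ⟨e, -, he⟩ := this
    have h := e.2
    simp only [Function.Embedding.subtype_apply] at he
    rw [he] at h
    exact h

end helpers

theorem aux_ndeg {t : ℕ} {V : Type*} (Gs : Fin t → SimpleGraph V) (x : Fin t × V) :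
    ndeg (disjUnion Gs) x = ndeg (Gs x.1) x.2 := by
  obtain ⟨i, v⟩ := x
  have : (disjUnion Gs).neighborSet (i, v) = (fun u => (i, u)) '' (Gs i).neighborSet v := by
    ext ⟨j, u⟩
    show (i = j ∧ (Gs i).Adj v u) ↔ _
    simp
    tauto
  rw [ndeg, this, Set.ncard_image_of_injective]
  · rfl
  · intro a b h
    simpa using h

theorem aux_clique {t : ℕ} {V : Type*} (Gs : Fin t → SimpleGraph V) (k : ℕ) (hk : 2 ≤ k) :
    (∃ i : Fin t, ∃ K : Finset V, (Gs i).IsNClique k K) ↔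
      ∃ K : Finset (Fin t × V), (disjUnion Gs).IsNClique k K := by
  classical
  constructor
  · rintro ⟨i, K, hK⟩
    refine ⟨K.map ⟨fun u => (i, u), fun a b h => by simpa using h⟩, ?_, by simp [hK.2]⟩
    intro x hx y hy hxy
    simp at hx hy
    obtain ⟨a, ha, rfl⟩ := hx
    obtain ⟨b, hb, rfl⟩ := hy
    exact ⟨rfl, hK.1 ha hb (fun h => hxy (Prod.ext rfl h))⟩
  · rintro ⟨K, hK⟩
    obtain ⟨⟨i, v⟩, hv⟩ : K.Nonempty := by
      rw [← Finset.card_pos, hK.2]; omega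
    have hi : ∀ x ∈ K, x.1 = i := by
      intro x hx
      by_cases h : x = (i, v)
      · rw [h]
      · exact (hK.1 hx hv h).1
    refine ⟨i, K.image Prod.snd, ?_, ?_⟩
    · intro a ha b hb hab
      simp at ha hb
      obtain ⟨j, ha⟩ := ha
      obtain ⟨l, hb⟩ := hb
      obtain rfl : j = i := hi _ ha
      obtain rfl : l = j := hi _ hb
      exact (hK.1 ha hb (by simpa using hab)).2
    · rw [Finset.card_image_of_injOn, hK.2]
      intro x hx y hy h
      exact Prod.ext ((hi x hx).trans (hi y hy).symm) h

theorem clique_in_some_summand_iff_vertexDeletion_in_subdivision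
    {t : ℕ} {V : Type*} [Fintype V] [DecidableEq V] (n m k d : ℕ) (hk : 2 ≤ k)
    (hd : 3 ≤ d - (k - 1)) (hn : Fintype.card V = n)
    (Gs : Fin t → SimpleGraph V) [∀ i, DecidableRel (Gs i).Adj]
    (hreg : ∀ i : Fin t, ∀ v : V, ndeg (Gs i) v = d)
    (hm : ∀ i : Fin t, (Gs i).edgeSet.ncard = m) :
    (∃ i : Fin t, ∃ K : Finset V, (Gs i).IsNClique k K) ↔
      ∃ U : Finset ((Fin t × V) ⊕ (disjUnion Gs).edgeSet),
        U.card ≤ k * (k - 1) / 2 ∧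
        ((Finset.univ \ U).val.map
            fun x => (((subdiv (disjUnion Gs)).neighborSet x) \ ↑U).ncard) =
          Multiset.replicate (n * t - k) d + Multiset.replicate k (d - (k - 1)) +
            Multiset.replicate (m * t - k * (k - 1) / 2) 2 := by

  classical
  rw [aux_clique Gs k hk]
  refine aux_main (disjUnion Gs) (n * t) (m * t) k d hk hd ?_ ?_ ?_
  · simp [hn, mul_comm]
  · have h1 := aux_handshake (disjUnion Gs) d (fun x => by rw [aux_ndeg, hreg])
    rw [Fintype.card_prod, Fintype.card_fin, hn] at h1
    rcases Nat.eq_zero_or_pos t with h0 | h0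
    · subst h0
      simp at h1 ⊢
    · have h2 := aux_handshake (Gs ⟨0, h0⟩) d (hreg _)
      rw [← Set.toFinset_card, ← Set.ncard_eq_toFinset_card', hm, hn] at h2
      have : 2 * Fintype.card (disjUnion Gs).edgeSet = 2 * (m * t) := by
        rw [h1, mul_assoc, ← h2]; ring
      omega
  · intro x
    rw [aux_ndeg, hreg]
end
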